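/- Let L_k be the k×k Jacobi matrix with diagonal entries a_j = 2j−1 for j = 1,…,k and off-diagonal entries b_j = j for j = 1,…,k−1, whose eigenvalues z_1^k,…,z_k^k are the zeros of the k-th Laguerre polynomial. Then the contracted zeros are asymptotically distributed according to the Marchenko–Pastur law: for every bounded continuous function φ : ℝ → ℝ, lim_{k→∞} (1/k) Σ_{j=1}^k φ(z_j^k / k) = (1/(2π)) ∫_0^4 φ(x) · (√(4x − x²)/x) dx. -/

import Mathlib

open Filter MeasureTheory

noncomputable section

/-- The `k × k` Jacobi (real symmetric tridiagonal) matrix with diagonal entries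
`a 0, …, a (k-1)` and sub/super-diagonal entries `b 0, …, b (k-2)` (0-indexed). -/
def jacobiMatrix (k : ℕ) (a b : ℕ → ℝ) : Matrix (Fin k) (Fin k) ℝ :=
  Matrix.of fun i j =>
    if (i : ℕ) = (j : ℕ) then a i
    else if (i : ℕ) + 1 = (j : ℕ) then b i
    else if (j : ℕ) + 1 = (i : ℕ) then b j
    else 0

theorem jacobiMatrix_isHermitian (k : ℕ) (a b : ℕ → ℝ) :
    (jacobiMatrix k a b).IsHermitian := by
  show _ = _
  ext i j
  simp only [Matrix.conjTranspose_apply, jacobiMatrix, Matrix.of_apply, star_trivial]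
  by_cases h1 : (i : ℕ) = (j : ℕ)
  · have h : i = j := Fin.ext h1
    subst h
    rfl
  · have h1' : ¬ (j : ℕ) = (i : ℕ) := fun h => h1 h.symm
    by_cases h2 : (i : ℕ) + 1 = (j : ℕ)
    · have h3 : ¬ (j : ℕ) + 1 = (i : ℕ) := by omega
      simp [h1, h1', h2, h3]
    · by_cases h3 : (j : ℕ) + 1 = (i : ℕ) <;> simp [h1, h1', h2, h3]

/-- `Trace[φ(J(a,b))] = ∑ⱼ φ(λⱼ)`, the sum of `φ` over the eigenvalues of the Jacobi matrix. -/
def jacobiTrace (k : ℕ) (a b : ℕ → ℝ) (φ : ℝ → ℝ) : ℝ :=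
  ∑ i, φ ((jacobiMatrix_isHermitian k a b).eigenvalues i)

/-- The class `𝒮`: small deviations `∑ᵢ |a_{i+1}^k − a_i^k| = o(k)` and entries in `[0,1]`. -/
def MemS (a : ℕ → ℕ → ℝ) : Prop :=
  ((fun k : ℕ => ∑ i ∈ Finset.range (k - 1), |a k (i + 1) - a k i|)
      =o[Filter.atTop] fun k : ℕ => (k : ℝ)) ∧
  ∀ k : ℕ, ∀ i < k, a k i ∈ Set.Icc (0 : ℝ) 1

/-- The class `𝒮′`: for every `δ ∈ (0,1)`, `∑ᵢ |a_{i+1}^k − a_i^k| = O(k^{1−δ})`, and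
`maxᵢ |a_i^k| = O(log k)`. -/
def MemS' (a : ℕ → ℕ → ℝ) : Prop :=
  (∀ δ : ℝ, δ ∈ Set.Ioo (0 : ℝ) 1 →
    ((fun k : ℕ => ∑ i ∈ Finset.range (k - 1), |a k (i + 1) - a k i|)
        =O[Filter.atTop] fun k : ℕ => (k : ℝ) ^ (1 - δ))) ∧
  ∃ C : ℝ, ∀ᶠ k : ℕ in Filter.atTop, ∀ i < k, |a k i| ≤ C * Real.log k

/-- `μ`-distributed on `I² = [0,1]²`. -/
def MuDistributedI (a b : ℕ → ℕ → ℝ) (μ : Measure (ℝ × ℝ)) : Prop :=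
  ∀ ψ : ℝ × ℝ → ℝ, ContinuousOn ψ (Set.Icc (0 : ℝ) 1 ×ˢ Set.Icc (0 : ℝ) 1) →
    Filter.Tendsto (fun k : ℕ => (1 / (k : ℝ)) * ∑ j ∈ Finset.range k, ψ (a k j, b k j))
      Filter.atTop (nhds (∫ p, ψ p ∂μ))

/-- `μ`-distributed on `ℝ²` (test functions: bounded continuous). -/
def MuDistributedR (a b : ℕ → ℕ → ℝ) (μ : Measure (ℝ × ℝ)) : Prop :=
  ∀ ψ : ℝ × ℝ → ℝ, Continuous ψ → (∃ C : ℝ, ∀ p, |ψ p| ≤ C) →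
    Filter.Tendsto (fun k : ℕ => (1 / (k : ℝ)) * ∑ j ∈ Finset.range k, ψ (a k j, b k j))
      Filter.atTop (nhds (∫ p, ψ p ∂μ))

/-- Tightness via closed bounded rectangles. -/
def TightRect (μ : Measure (ℝ × ℝ)) : Prop :=
  ∀ ε : ℝ, 0 < ε → ∃ x₁ x₂ y₁ y₂ : ℝ,
    μ ((Set.Icc x₁ x₂ ×ˢ Set.Icc y₁ y₂)ᶜ) < ENNReal.ofReal ε

/-- Almost everywhere increasing sequence of vectors. -/
def AEIncreasing (a : ℕ → ℕ → ℝ) : Prop :=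
  Filter.Tendsto
    (fun k : ℕ => (((Finset.range (k - 1)).filter fun i => a k i ≤ a k (i + 1)).card : ℝ) / k)
    Filter.atTop (nhds 1)

/-- Almost everywhere decreasing sequence of vectors. -/
def AEDecreasing (a : ℕ → ℕ → ℝ) : Prop :=
  Filter.Tendsto
    (fun k : ℕ => (((Finset.range (k - 1)).filter fun i => a k (i + 1) ≤ a k i).card : ℝ) / k)
    Filter.atTop (nhds 1)

/-- Almost everywhere monotone sequence of vectors. -/
def AEMonotone (a : ℕ → ℕ → ℝ) : Prop :=
  AEIncreasing a ∨ AEDecreasing a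

/-!
The monic Laguerre polynomial `P` of degree `k` satisfies `x P'' + (1 - x) P' + k P = 0`. At a zero
`z i` this becomes the Stieltjes relation `2 z i ∑_{j ≠ i} (z i - z j)⁻¹ = z i - 1`; multiplying it
by `z i ^ m` and summing over `i` expresses the power sum of degree `m + 1` through those of lower
degree. After dividing the zeros by `k`, this is the Catalan recursion up to an error `O(1 / k)`, so
the moments of the contracted zeros converge to the Catalan numbers. These are the moments of the
Marchenko–Pastur law, as the substitution `x = 4 sin² t` shows. By Gershgorin's theorem the
contracted zeros lie in `[0, 4]`, where Weierstrass approximation passes from powers to continuous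
functions.
-/

open Polynomial Finset

/-! ### Jacobi matrices -/

theorem det_eq_of_last_row_col_eq_zero {R : Type*} [CommRing R] {n : ℕ}
    (A : Matrix (Fin (n + 2)) (Fin (n + 2)) R)
    (hrow : ∀ j : Fin n, A (Fin.last _) j.castSucc.castSucc = 0)
    (hcol : ∀ i : Fin n, A i.castSucc.castSucc (Fin.last _) = 0) :
    A.det =
      A (Fin.last _) (Fin.last _) * (A.submatrix Fin.castSucc Fin.castSucc).det -
        A (Fin.last _) (Fin.last n).castSucc * A (Fin.last n).castSucc (Fin.last _) *
          ((A.submatrix Fin.castSucc Fin.castSucc).submatrix Fin.castSucc Fin.castSucc).det := by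
  have hminor : (A.submatrix Fin.castSucc (Fin.last n).castSucc.succAbove).det =
      A (Fin.last n).castSucc (Fin.last _) *
        ((A.submatrix Fin.castSucc Fin.castSucc).submatrix Fin.castSucc Fin.castSucc).det := by
    have hcomp : (Fin.last n).castSucc.succAbove ∘ Fin.castSucc =
        (Fin.castSucc ∘ Fin.castSucc : Fin n → Fin (n + 2)) := by
      ext j
      simp [Fin.succAbove_castSucc_of_lt, Fin.castSucc_lt_last]
    rw [Matrix.det_succ_column _ (Fin.last n), Fin.sum_univ_castSucc]
    simp [hcol, hcomp, Fin.succAbove_last, ← two_mul]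
  rw [Matrix.det_succ_row _ (Fin.last (n + 1)), Fin.sum_univ_castSucc, Fin.sum_univ_castSucc]
  simp only [hrow, Fin.succAbove_last, hminor, Nat.succ_eq_add_one, Fin.val_last,
    Fin.val_castSucc, mul_zero, zero_mul, sum_const_zero, odd_add_one_self, Odd.neg_one_pow,
    neg_mul, one_mul, Matrix.submatrix_submatrix, zero_add, ← two_mul, even_two, Even.mul_right,
    Even.neg_pow, one_pow]
  ring

/-- The monic orthogonal polynomials of the three-term recurrence with coefficients `a` and `b`,
that is, the characteristic polynomials of the Jacobi matrices. -/
def threeTermPolynomial {R : Type*} [CommRing R] (a b : ℕ → R) : ℕ → R[X]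
  | 0 => 1
  | 1 => X - C (a 0)
  | n + 2 => (X - C (a (n + 1))) * threeTermPolynomial a b (n + 1) -
      C (b n ^ 2) * threeTermPolynomial a b n

theorem charmatrix_jacobiMatrix_submatrix_castSucc (n : ℕ) (a b : ℕ → ℝ) :
    (jacobiMatrix (n + 1) a b).charmatrix.submatrix Fin.castSucc Fin.castSucc =
      (jacobiMatrix n a b).charmatrix := by
  ext1 i j
  simp [Matrix.charmatrix_apply, Matrix.diagonal_apply, jacobiMatrix]

theorem charmatrix_jacobiMatrix_apply_eq_zero {n : ℕ} (a b : ℕ → ℝ) {i j : Fin n}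
    (h : (i : ℕ) + 1 < j ∨ (j : ℕ) + 1 < i) : (jacobiMatrix n a b).charmatrix i j = 0 := by
  have hij : i ≠ j := by rintro rfl; lia
  rw [Matrix.charmatrix_apply_ne _ _ _ hij, neg_eq_zero, C_eq_zero, jacobiMatrix, Matrix.of_apply,
    if_neg (by lia), if_neg (by lia), if_neg (by lia)]

theorem charpoly_jacobiMatrix (a b : ℕ → ℝ) :
    ∀ n, (jacobiMatrix n a b).charpoly = threeTermPolynomial a b n
  | 0 => by simp [Matrix.charpoly, threeTermPolynomial]
  | 1 => by simp [Matrix.charpoly, threeTermPolynomial, jacobiMatrix]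
  | n + 2 => by
    rw [Matrix.charpoly, det_eq_of_last_row_col_eq_zero _
        (fun j => charmatrix_jacobiMatrix_apply_eq_zero a b (.inr (by simp)))
        (fun i => charmatrix_jacobiMatrix_apply_eq_zero a b (.inl (by simp))),
      charmatrix_jacobiMatrix_submatrix_castSucc, charmatrix_jacobiMatrix_submatrix_castSucc,
      ← Matrix.charpoly, ← Matrix.charpoly, charpoly_jacobiMatrix, charpoly_jacobiMatrix,
      threeTermPolynomial]
    have hne : n + 2 ≠ n := by lia
    simp [jacobiMatrix, Fin.ext_iff, sq, hne]

theorem threeTermPolynomial_eq_nodal (k : ℕ) (a b : ℕ → ℝ) :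
    threeTermPolynomial a b k =
      Lagrange.nodal univ (jacobiMatrix_isHermitian k a b).eigenvalues := by
  simpa [charpoly_jacobiMatrix, Lagrange.nodal_eq] using
    (jacobiMatrix_isHermitian k a b).charpoly_eq

theorem sum_norm_erase_jacobiMatrix_le (k : ℕ) (a b : ℕ → ℝ) (i : Fin k) :
    ∑ j ∈ univ.erase i, ‖jacobiMatrix k a b i j‖ ≤
      |b i| + if (i : ℕ) = 0 then 0 else |b (i - 1)| := by
  have hentry : ∀ j ∈ univ.erase i, ‖jacobiMatrix k a b i j‖ =
      (if (j : ℕ) = i + 1 then |b i| else 0) + if (j : ℕ) + 1 = i then |b (i - 1)| else 0 := by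
    intro j hj
    have hij : (i : ℕ) ≠ j := fun h => (mem_erase.1 hj).1 (Fin.ext h.symm)
    simp only [jacobiMatrix, Matrix.of_apply, if_neg hij, eq_comm (a := (i : ℕ) + 1)]
    split_ifs with h₁ h₂ h₂
    · lia
    · simp
    · simp [← h₂]
    · simp
  calc ∑ j ∈ univ.erase i, ‖jacobiMatrix k a b i j‖
    _ = ∑ j ∈ univ.erase i, ((if (j : ℕ) = i + 1 then |b i| else 0) +
          if (j : ℕ) + 1 = i then |b (i - 1)| else 0) := sum_congr rfl hentry
    _ ≤ ∑ j : Fin k, ((if (j : ℕ) = i + 1 then |b i| else 0) +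
          if (j : ℕ) + 1 = i then |b (i - 1)| else 0) :=
      sum_le_univ_sum_of_nonneg fun j => by positivity
    _ = ∑ j ∈ range k, (if j = i + 1 then |b i| else 0) +
          ∑ j ∈ range k, if j + 1 = i then |b (i - 1)| else 0 := by
      rw [sum_add_distrib, Fin.sum_univ_eq_sum_range (fun j => if j = i + 1 then |b i| else 0),
        Fin.sum_univ_eq_sum_range (fun j => if j + 1 = i then |b (i - 1)| else 0)]
    _ ≤ |b i| + if (i : ℕ) = 0 then 0 else |b (i - 1)| := by
      gcongr
      · rw [sum_ite_eq']
        split_ifs <;> simp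
      · rcases (i : ℕ) with _ | m
        · simp
        · simp only [add_left_inj, sum_ite_eq', Nat.add_sub_cancel]
          split_ifs <;> simp_all

theorem exists_eigenvalues_jacobiMatrix_mem_closedBall (k : ℕ) (a b : ℕ → ℝ) (j : Fin k) :
    ∃ i : Fin k, (jacobiMatrix_isHermitian k a b).eigenvalues j ∈
      Metric.closedBall (a i) (|b i| + if (i : ℕ) = 0 then 0 else |b (i - 1)|) := by
  have hev : Module.End.HasEigenvalue (Matrix.toLin' (jacobiMatrix k a b))
      ((jacobiMatrix_isHermitian k a b).eigenvalues j) := by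
    rw [Module.End.hasEigenvalue_iff_mem_spectrum, Matrix.spectrum_toLin']
    exact (jacobiMatrix_isHermitian k a b).eigenvalues_mem_spectrum_real j
  obtain ⟨i, hi⟩ := eigenvalue_mem_ball hev
  refine ⟨i, Metric.closedBall_subset_closedBall (sum_norm_erase_jacobiMatrix_le k a b i) ?_⟩
  simpa [jacobiMatrix] using hi

theorem isCoprime_threeTermPolynomial_succ {K : Type*} [Field K] (a : ℕ → K) {b : ℕ → K}
    (hb : ∀ n, b n ≠ 0) (n : ℕ) :
    IsCoprime (threeTermPolynomial a b (n + 1)) (threeTermPolynomial a b n) := by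
  induction n with
  | zero => exact isCoprime_one_right
  | succ n ih =>
    have hunit : IsUnit (-C (b n ^ 2)) := (isUnit_C.2 (pow_ne_zero 2 (hb n)).isUnit).neg
    rw [threeTermPolynomial, sub_eq_add_neg, ← neg_mul, add_comm, mul_comm (X - C _)]
    exact ((isCoprime_mul_unit_left_left hunit _ _).2 ih.symm).add_mul_left_left _

/-! ### Laguerre polynomials -/

/-- The monic Laguerre polynomial `(-1) ^ n * n! * L_n` of parameter `0`. -/
def monicLaguerre (n : ℕ) : ℝ[X] :=
  threeTermPolynomial (fun i => 2 * (i : ℝ) + 1) (fun i => (i : ℝ) + 1) n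

theorem monicLaguerre_zero : monicLaguerre 0 = 1 := rfl

theorem monicLaguerre_one : monicLaguerre 1 = X - 1 := by
  simp [monicLaguerre, threeTermPolynomial]

theorem monicLaguerre_add_two (n : ℕ) :
    monicLaguerre (n + 2) =
      (X - (2 * (n : ℝ[X]) + 3)) * monicLaguerre (n + 1) -
        ((n : ℝ[X]) + 1) ^ 2 * monicLaguerre n := by
  simp only [monicLaguerre, threeTermPolynomial, Nat.cast_add, Nat.cast_one, map_add, map_mul,
    map_pow, map_one, C_ofNat, C_eq_natCast]
  ring

theorem derivative_monicLaguerre_succ (n : ℕ) :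
    derivative (monicLaguerre (n + 1)) =
        ((n : ℝ[X]) + 1) * (monicLaguerre n - derivative (monicLaguerre n)) ∧
      X * derivative (monicLaguerre (n + 1)) =
        ((n : ℝ[X]) + 1) * monicLaguerre (n + 1) + ((n : ℝ[X]) + 1) ^ 2 * monicLaguerre n := by
  induction n with
  | zero => simp [monicLaguerre_zero, monicLaguerre_one]
  | succ n ih =>
    obtain ⟨hlower, hraise⟩ := ih
    have hderiv : derivative (monicLaguerre (n + 2)) =
        ((n : ℝ[X]) + 2) * (monicLaguerre (n + 1) - derivative (monicLaguerre (n + 1))) := by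
      rw [monicLaguerre_add_two]
      simp only [derivative_sub, derivative_mul, derivative_X, derivative_add, derivative_natCast,
        derivative_one, derivative_pow, derivative_ofNat]
      linear_combination hraise - ((n : ℝ[X]) + 1) * hlower
    push_cast
    constructor
    · linear_combination hderiv
    · rw [hderiv]
      linear_combination
        -((n : ℝ[X]) + 2) * hraise - ((n : ℝ[X]) + 2) * monicLaguerre_add_two n

theorem monicLaguerre_ode (n : ℕ) :
    X * derivative (derivative (monicLaguerre n)) + (1 - X) * derivative (monicLaguerre n) +
      (n : ℝ[X]) * monicLaguerre n = 0 := by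
  cases n with
  | zero => simp [monicLaguerre_zero]
  | succ n =>
    obtain ⟨hlower, hraise⟩ := derivative_monicLaguerre_succ n
    have hdiff := congrArg derivative hraise
    simp only [derivative_mul, derivative_X, derivative_add, derivative_natCast, derivative_one,
      derivative_pow] at hdiff
    push_cast
    linear_combination hdiff + ((n : ℝ[X]) + 1) * hlower - hraise

theorem separable_monicLaguerre (n : ℕ) : (monicLaguerre n).Separable := by
  cases n with
  | zero => exact separable_one
  | succ n =>
    have hunit : IsUnit (((n : ℝ[X]) + 1) ^ 2) := by
      rw [← C_eq_natCast, ← C_1, ← C_add, ← C_pow]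
      exact isUnit_C.2 (by positivity : ((n : ℝ) + 1) ^ 2 ≠ 0).isUnit
    have hcoprime : IsCoprime (monicLaguerre (n + 1)) (monicLaguerre n) :=
      isCoprime_threeTermPolynomial_succ _ (fun m => by positivity) n
    have hX : IsCoprime (monicLaguerre (n + 1)) (X * derivative (monicLaguerre (n + 1))) := by
      rw [(derivative_monicLaguerre_succ n).2]
      exact ((isCoprime_mul_unit_left_right hunit _ _).2 hcoprime).mul_add_right_right _
    exact hX.of_mul_right_right

/-- The zeros of the `k`-th Laguerre polynomial, encoded as the eigenvalues of the Jacobi matrix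
with diagonal `1, 3, 5, …` and off-diagonal `1, 2, 3, …`. -/
def laguerreZero (k : ℕ) : Fin k → ℝ :=
  (jacobiMatrix_isHermitian k (fun i => 2 * (i : ℝ) + 1) (fun i => (i : ℝ) + 1)).eigenvalues

theorem monicLaguerre_eq_nodal (k : ℕ) :
    monicLaguerre k = Lagrange.nodal univ (laguerreZero k) :=
  threeTermPolynomial_eq_nodal k _ _

theorem laguerreZero_injective (k : ℕ) : Function.Injective (laguerreZero k) := by
  rw [← separable_prod_X_sub_C_iff, ← Lagrange.nodal_eq, ← monicLaguerre_eq_nodal]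
  exact separable_monicLaguerre k

theorem laguerreZero_div_mem_Icc (k : ℕ) (j : Fin k) :
    laguerreZero k j / k ∈ Set.Icc (0 : ℝ) 4 := by
  obtain ⟨i, hi⟩ := exists_eigenvalues_jacobiMatrix_mem_closedBall k
    (fun i => 2 * (i : ℝ) + 1) (fun i => (i : ℝ) + 1) j
  have hradius : |((i : ℕ) : ℝ) + 1| +
      (if (i : ℕ) = 0 then 0 else |(((i : ℕ) - 1 : ℕ) : ℝ) + 1|) ≤ 2 * (i : ℕ) + 1 := by
    rcases (i : ℕ) with _ | m
    · simp
    · have habs : |(m : ℝ) + 1 + 1| = m + 1 + 1 := abs_of_pos (by positivity)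
      have habs' : |(m : ℝ) + 1| = m + 1 := abs_of_pos (by positivity)
      rw [if_neg m.succ_ne_zero, Nat.add_sub_cancel, Nat.cast_succ, habs, habs']
      linarith
  have hdist : |laguerreZero k j - (2 * (i : ℕ) + 1)| ≤ 2 * (i : ℕ) + 1 :=
    (Metric.mem_closedBall.1 hi).trans hradius
  have hik : ((i : ℕ) : ℝ) + 1 ≤ k := mod_cast i.isLt
  have hk : (0 : ℝ) < k := by linarith [(i : ℕ).cast_nonneg (α := ℝ)]
  rw [abs_le] at hdist
  exact ⟨div_nonneg (by linarith) hk.le, (div_le_iff₀ hk).2 (by linarith)⟩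

/-! ### Power sums of the zeros -/

section PowerSums

variable {ι K : Type*} [DecidableEq ι] [Field K]

theorem eval_derivative_derivative_nodal {s : Finset ι} {v : ι → K}
    (hv : Set.InjOn v s) {i : ι} (hi : i ∈ s) :
    (derivative (derivative (Lagrange.nodal s v))).eval (v i) =
      2 * (derivative (Lagrange.nodal s v)).eval (v i) * ∑ j ∈ s.erase i, (v i - v j)⁻¹ := by
  have hlog : (derivative (Lagrange.nodal (s.erase i) v)).eval (v i) =
      (Lagrange.nodal (s.erase i) v).eval (v i) * ∑ j ∈ s.erase i, (v i - v j)⁻¹ := by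
    rw [Lagrange.derivative_nodal, eval_finsetSum, mul_sum]
    refine sum_congr rfl fun j hj => ?_
    obtain ⟨hji, hjs⟩ := mem_erase.1 hj
    have hne : v i - v j ≠ 0 := sub_ne_zero.2 fun h => hji (hv hi hjs h).symm
    rw [Lagrange.nodal_eq_mul_nodal_erase hj]
    simp [hne, mul_right_comm]
  rw [Lagrange.eval_nodal_derivative_eval_node_eq hi, mul_assoc, ← hlog,
    Lagrange.nodal_eq_mul_nodal_erase hi]
  simp [two_mul]

theorem two_mul_eval_mul_sum_inv_sub_eq {s : Finset ι} {v : ι → K}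
    (hv : Set.InjOn v s) {p q r : K[X]}
    (hode : p * derivative (derivative (Lagrange.nodal s v)) +
      q * derivative (Lagrange.nodal s v) + r * Lagrange.nodal s v = 0)
    {i : ι} (hi : i ∈ s) :
    2 * p.eval (v i) * ∑ j ∈ s.erase i, (v i - v j)⁻¹ = -q.eval (v i) := by
  have hderiv : (derivative (Lagrange.nodal s v)).eval (v i) ≠ 0 := by
    rw [Lagrange.eval_nodal_derivative_eval_node_eq hi]
    refine Lagrange.eval_nodal_not_at_node fun j hj h => ?_
    obtain ⟨hji, hjs⟩ := mem_erase.1 hj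
    exact hji (hv hi hjs h).symm
  have heval := congrArg (eval (v i)) hode
  simp only [eval_add, eval_mul, eval_zero, Lagrange.eval_nodal_at_node hi, mul_zero, add_zero,
    eval_derivative_derivative_nodal hv hi] at heval
  apply mul_left_cancel₀ hderiv
  linear_combination heval

theorem pow_sub_pow_mul_inv_sub {z : ι → K} (hz : Function.Injective z) (m : ℕ) (i j : ι) :
    (z i ^ (m + 1) - z j ^ (m + 1)) * (z i - z j)⁻¹ =
      ∑ ab ∈ antidiagonal m, z i ^ ab.1 * z j ^ ab.2 - if i = j then (m + 1) * z i ^ m else 0 := by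
  split_ifs with hij
  · have hterm : ∀ ab ∈ antidiagonal m, z i ^ ab.1 * z i ^ ab.2 = z i ^ m := fun ab hab => by
      rw [← pow_add, mem_antidiagonal.1 hab]
    simp [← hij, sum_congr rfl hterm]
  · have hgeom : (∑ ab ∈ antidiagonal m, z i ^ ab.1 * z j ^ ab.2) * (z i - z j) =
        z i ^ (m + 1) - z j ^ (m + 1) := by
      rw [Finset.Nat.sum_antidiagonal_eq_sum_range_succ fun a b => z i ^ a * z j ^ b]
      exact geom_sum₂_mul _ _ (m + 1)
    rw [← hgeom, mul_inv_cancel_right₀ (sub_ne_zero.2 (hz.ne hij)), sub_zero]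

theorem two_mul_sum_pow_mul_sum_inv_sub [Fintype ι] {z : ι → K} (hz : Function.Injective z)
    (m : ℕ) :
    2 * ∑ i, z i ^ (m + 1) * ∑ j ∈ univ.erase i, (z i - z j)⁻¹ =
      ∑ ab ∈ antidiagonal m, (∑ i, z i ^ ab.1) * ∑ i, z i ^ ab.2 - (m + 1) * ∑ i, z i ^ m := by
  -- The diagonal term may be restored because `(z i - z i)⁻¹ = 0⁻¹ = 0`.
  have hdiag : ∀ i, ∑ j ∈ univ.erase i, (z i - z j)⁻¹ = ∑ j, (z i - z j)⁻¹ := fun i =>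
    sum_erase _ (by simp)
  calc 2 * ∑ i, z i ^ (m + 1) * ∑ j ∈ univ.erase i, (z i - z j)⁻¹
    _ = ∑ i, ∑ j, z i ^ (m + 1) * (z i - z j)⁻¹ + ∑ i, ∑ j, z j ^ (m + 1) * (z j - z i)⁻¹ := by
      rw [two_mul]
      simp only [hdiag, mul_sum]
      exact congrArg _ sum_comm
    _ = ∑ i, ∑ j, (z i ^ (m + 1) - z j ^ (m + 1)) * (z i - z j)⁻¹ := by
      simp only [← sum_add_distrib]
      refine sum_congr rfl fun i _ => sum_congr rfl fun j _ => ?_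
      rw [← neg_sub (z i) (z j), inv_neg]
      ring
    _ = ∑ i, ∑ j, ∑ ab ∈ antidiagonal m, z i ^ ab.1 * z j ^ ab.2 - (m + 1) * ∑ i, z i ^ m := by
      simp [pow_sub_pow_mul_inv_sub hz, mul_sum]
    _ = ∑ ab ∈ antidiagonal m, (∑ i, z i ^ ab.1) * ∑ i, z i ^ ab.2 - (m + 1) * ∑ i, z i ^ m := by
      simp only [sum_mul_sum, sum_comm (s := antidiagonal m)]

end PowerSums

theorem sum_laguerreZero_pow_succ (m k : ℕ) :
    ∑ i, laguerreZero k i ^ (m + 1) =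
      ∑ ab ∈ antidiagonal m, (∑ i, laguerreZero k i ^ ab.1) * ∑ i, laguerreZero k i ^ ab.2 -
        m * ∑ i, laguerreZero k i ^ m := by
  have hode := monicLaguerre_ode k
  rw [monicLaguerre_eq_nodal] at hode
  have hstieltjes : ∀ i, 2 * (laguerreZero k i ^ (m + 1) *
      ∑ j ∈ univ.erase i, (laguerreZero k i - laguerreZero k j)⁻¹) =
      laguerreZero k i ^ (m + 1) - laguerreZero k i ^ m := by
    intro i
    have h := two_mul_eval_mul_sum_inv_sub_eq (laguerreZero_injective k).injOn hode (mem_univ i)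
    simp only [eval_sub, eval_one, eval_X] at h
    linear_combination laguerreZero k i ^ m * h
  have hsum := two_mul_sum_pow_mul_sum_inv_sub (laguerreZero_injective k) m
  simp only [mul_sum univ _ (2 : ℝ), hstieltjes, sum_sub_distrib] at hsum
  linear_combination hsum

/-! ### Empirical measures and the method of moments -/

/-- The uniform probability measure on the (finitely many, not necessarily distinct) values of `z`;
it is `0` when there are none. -/
def empiricalMeasure {ι α : Type*} [Fintype ι] [MeasurableSpace α] (z : ι → α) : Measure α :=
  (Fintype.card ι : NNReal)⁻¹ • ∑ i, Measure.dirac (z i)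

instance isFiniteMeasure_empiricalMeasure {ι α : Type*} [Fintype ι] [MeasurableSpace α]
    (z : ι → α) : IsFiniteMeasure (empiricalMeasure z) := by
  unfold empiricalMeasure
  infer_instance

theorem integral_empiricalMeasure {ι α E : Type*} [Fintype ι] [MeasurableSpace α]
    [MeasurableSingletonClass α] [NormedAddCommGroup E] [NormedSpace ℝ E] [CompleteSpace E]
    (z : ι → α) (f : α → E) :
    ∫ x, f x ∂empiricalMeasure z = (Fintype.card ι : ℝ)⁻¹ • ∑ i, f (z i) := by
  rw [empiricalMeasure, integral_smul_nnreal_measure,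
    integral_finsetSum_measure fun i _ => integrable_dirac (by simp)]
  simp [NNReal.smul_def]

theorem ae_empiricalMeasure {ι α : Type*} [Fintype ι] [MeasurableSpace α]
    [MeasurableSingletonClass α] {z : ι → α} {p : α → Prop} (hz : ∀ i, p (z i)) :
    ∀ᵐ x ∂empiricalMeasure z, p x := by
  rw [empiricalMeasure]
  refine Measure.ae_smul_measure (ae_finsetSum_measure_iff.2 fun i _ => ?_) _
  rw [ae_dirac_eq]
  exact hz i

section MethodOfMoments

theorem integrable_of_ae_mem_isCompact {X E : Type*} [TopologicalSpace X] [T2Space X]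
    [MeasurableSpace X] [OpensMeasurableSpace X] [NormedAddCommGroup E] {K : Set X}
    (hK : IsCompact K) {μ : Measure X} [IsFiniteMeasureOnCompacts μ] (hμ : ∀ᵐ x ∂μ, x ∈ K)
    {f : X → E} (hf : ContinuousOn f K) : Integrable f μ := by
  rw [← Measure.restrict_eq_self_of_ae_mem hμ]
  exact hf.integrableOn_compact hK

theorem dist_integral_le_of_ae_mem_isCompact {X E : Type*} [TopologicalSpace X] [T2Space X]
    [MeasurableSpace X] [OpensMeasurableSpace X] [NormedAddCommGroup E] [NormedSpace ℝ E]
    {K : Set X} (hK : IsCompact K) {μ : Measure X} [IsFiniteMeasure μ] (hμ : ∀ᵐ x ∂μ, x ∈ K)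
    {f g : X → E} (hf : ContinuousOn f K) (hg : ContinuousOn g K) {δ : ℝ}
    (hδ : ∀ x ∈ K, ‖f x - g x‖ ≤ δ) :
    dist (∫ x, f x ∂μ) (∫ x, g x ∂μ) ≤ δ * μ.real Set.univ := by
  rw [dist_eq_norm, ← integral_sub (integrable_of_ae_mem_isCompact hK hμ hf)
    (integrable_of_ae_mem_isCompact hK hμ hg)]
  exact norm_integral_le_of_norm_le_const (hμ.mono hδ)

variable {ι : Type*} {l : Filter ι} {μ : ι → Measure ℝ} {ν : Measure ℝ}

theorem tendsto_integral_eval_of_tendsto_integral_pow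
    (hμ : ∀ i m, Integrable (fun x => x ^ m) (μ i)) (hν : ∀ m, Integrable (fun x => x ^ m) ν)
    (hmom : ∀ m : ℕ, Tendsto (fun i => ∫ x, x ^ m ∂μ i) l (nhds (∫ x, x ^ m ∂ν))) (p : ℝ[X]) :
    Tendsto (fun i => ∫ x, p.eval x ∂μ i) l (nhds (∫ x, p.eval x ∂ν)) := by
  simp only [eval_eq_sum_range]
  simp_rw [fun i => integral_finsetSum (μ := μ i) (range (p.natDegree + 1))
      fun m _ => (hμ i m).const_mul (p.coeff m),
    integral_finsetSum (μ := ν) (range (p.natDegree + 1)) fun m _ => (hν m).const_mul (p.coeff m),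
    integral_const_mul]
  exact tendsto_finsetSum _ fun m _ => (hmom m).const_mul _

theorem tendsto_integral_of_tendsto_integral_pow {a b : ℝ} [∀ i, IsFiniteMeasure (μ i)]
    [IsFiniteMeasure ν] (hμ : ∀ i, ∀ᵐ x ∂μ i, x ∈ Set.Icc a b) (hν : ∀ᵐ x ∂ν, x ∈ Set.Icc a b)
    (hmom : ∀ m : ℕ, Tendsto (fun i => ∫ x, x ^ m ∂μ i) l (nhds (∫ x, x ^ m ∂ν)))
    {f : ℝ → ℝ} (hf : ContinuousOn f (Set.Icc a b)) :
    Tendsto (fun i => ∫ x, f x ∂μ i) l (nhds (∫ x, f x ∂ν)) := by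
  have hmass : Tendsto (fun i => (μ i).real Set.univ) l (nhds (ν.real Set.univ)) := by
    simpa using hmom 0
  set M := ν.real Set.univ + 1
  have hMpos : 0 < M := by positivity
  refine Metric.tendsto_nhds.2 fun ε hε => ?_
  obtain ⟨p, hp⟩ := exists_polynomial_near_of_continuousOn a b f hf (ε / (3 * M)) (by positivity)
  have happrox : ∀ (ρ : Measure ℝ) [IsFiniteMeasure ρ], (∀ᵐ x ∂ρ, x ∈ Set.Icc a b) →
      ρ.real Set.univ ≤ M → dist (∫ x, p.eval x ∂ρ) (∫ x, f x ∂ρ) ≤ ε / 3 := by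
    intro ρ _ hρ hρM
    calc dist (∫ x, p.eval x ∂ρ) (∫ x, f x ∂ρ)
      _ ≤ ε / (3 * M) * ρ.real Set.univ :=
        dist_integral_le_of_ae_mem_isCompact isCompact_Icc hρ p.continuousOn hf
          fun x hx => (hp x hx).le
      _ ≤ ε / (3 * M) * M := by gcongr
      _ = ε / 3 := by field_simp
  have hpow : ∀ m : ℕ, ContinuousOn (fun x : ℝ => x ^ m) (Set.Icc a b) := fun m =>
    (continuous_pow m).continuousOn
  have hpoly := tendsto_integral_eval_of_tendsto_integral_pow
    (fun i m => integrable_of_ae_mem_isCompact isCompact_Icc (hμ i) (hpow m))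
    (fun m => integrable_of_ae_mem_isCompact isCompact_Icc hν (hpow m)) hmom p
  filter_upwards [hmass.eventually_lt_const (lt_add_one _),
    Metric.tendsto_nhds.1 hpoly (ε / 3) (by positivity)] with i hi hpi
  calc dist (∫ x, f x ∂μ i) (∫ x, f x ∂ν)
    _ ≤ dist (∫ x, f x ∂μ i) (∫ x, p.eval x ∂μ i) +
          dist (∫ x, p.eval x ∂μ i) (∫ x, p.eval x ∂ν) +
          dist (∫ x, p.eval x ∂ν) (∫ x, f x ∂ν) := dist_triangle4 _ _ _ _
    _ < ε / 3 + ε / 3 + ε / 3 := by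
      refine add_lt_add_of_lt_of_le (add_lt_add_of_le_of_lt ?_ hpi)
        (happrox ν hν (lt_add_one _).le)
      rw [dist_comm]
      exact happrox (μ i) (hμ i) hi.le
    _ = ε := by ring

end MethodOfMoments

/-! ### The Marchenko–Pastur law -/

/-- The Marchenko–Pastur law of ratio `1`, with density `√(4 x - x ^ 2) / (2 π x)` on `(0, 4]`. -/
def marchenkoPastur : Measure ℝ :=
  (volume.restrict (Set.Ioc 0 4)).withDensity fun x =>
    ENNReal.ofReal (√(4 * x - x ^ 2) / (2 * Real.pi * x))

theorem integral_marchenkoPastur (f : ℝ → ℝ) :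
    ∫ x, f x ∂marchenkoPastur =
      1 / (2 * Real.pi) * ∫ x in (0 : ℝ)..4, f x * (√(4 * x - x ^ 2) / x) := by
  rw [marchenkoPastur, integral_withDensity_eq_integral_toReal_smul (by fun_prop) (by simp),
    intervalIntegral.integral_of_le (by norm_num), ← integral_const_mul]
  refine setIntegral_congr_fun measurableSet_Ioc fun x hx => ?_
  have hx0 : 0 < x := hx.1
  rw [ENNReal.toReal_ofReal (by positivity), smul_eq_mul]
  field_simp

theorem ae_marchenkoPastur_mem_Icc : ∀ᵐ x ∂marchenkoPastur, x ∈ Set.Icc (0 : ℝ) 4 :=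
  (withDensity_absolutelyContinuous _ _).ae_le <|
    (ae_restrict_mem measurableSet_Ioc).mono fun _ hx => Set.Ioc_subset_Icc_self hx

theorem monotoneOn_four_mul_sin_sq :
    MonotoneOn (fun t => 4 * Real.sin t ^ 2) (Set.Icc 0 (Real.pi / 2)) := by
  intro s hs t ht hst
  have hpi := Real.pi_pos
  have hsin : Real.sin s ≤ Real.sin t :=
    Real.sin_le_sin_of_le_of_le_pi_div_two (by linarith [hs.1]) ht.2 hst
  have hsin_nonneg : 0 ≤ Real.sin s := Real.sin_nonneg_of_nonneg_of_le_pi hs.1 (by linarith [hs.2])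
  dsimp only
  gcongr

theorem integral_eq_integral_comp_four_mul_sin_sq {E : Type*} [NormedAddCommGroup E]
    [NormedSpace ℝ E] (g : ℝ → E) :
    ∫ x in (0 : ℝ)..4, g x =
      ∫ t in (0 : ℝ)..(Real.pi / 2), (8 * Real.sin t * Real.cos t) • g (4 * Real.sin t ^ 2) := by
  have himage : (fun t => 4 * Real.sin t ^ 2) '' Set.Icc 0 (Real.pi / 2) = Set.Icc 0 4 := by
    rw [ContinuousOn.image_Icc_of_monotoneOn (by positivity) (by fun_prop)
      monotoneOn_four_mul_sin_sq]
    simp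
  have hderiv : ∀ t, HasDerivAt (fun t => 4 * Real.sin t ^ 2) (8 * Real.sin t * Real.cos t) t := by
    intro t
    refine (((Real.hasDerivAt_sin t).pow 2).const_mul 4).congr_deriv ?_
    ring
  rw [intervalIntegral.integral_of_le (by norm_num),
    intervalIntegral.integral_of_le (by positivity), ← integral_Icc_eq_integral_Ioc,
    ← integral_Icc_eq_integral_Ioc, ← himage,
    integral_image_eq_integral_deriv_smul_of_monotoneOn measurableSet_Icc
      (fun t _ => (hderiv t).hasDerivWithinAt) monotoneOn_four_mul_sin_sq]

theorem integral_marchenkoPastur_eq_integral_sin_cos (f : ℝ → ℝ) :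
    ∫ x, f x ∂marchenkoPastur =
      4 / Real.pi * ∫ t in (0 : ℝ)..(Real.pi / 2), f (4 * Real.sin t ^ 2) * Real.cos t ^ 2 := by
  have hpi := Real.pi_pos
  have hintegrand : Set.EqOn
      (fun t => (8 * Real.sin t * Real.cos t) • (f (4 * Real.sin t ^ 2) *
        (√(4 * (4 * Real.sin t ^ 2) - (4 * Real.sin t ^ 2) ^ 2) / (4 * Real.sin t ^ 2))))
      (fun t => 8 * (f (4 * Real.sin t ^ 2) * Real.cos t ^ 2)) (Set.Ioc 0 (Real.pi / 2)) := by
    intro t ht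
    have hsin : 0 < Real.sin t := Real.sin_pos_of_pos_of_lt_pi ht.1 (by linarith [ht.2])
    have hcos : 0 ≤ Real.cos t := Real.cos_nonneg_of_mem_Icc ⟨by linarith [ht.1], ht.2⟩
    have hsq : 4 * (4 * Real.sin t ^ 2) - (4 * Real.sin t ^ 2) ^ 2 =
        (4 * Real.sin t * Real.cos t) ^ 2 := by
      linear_combination (-16 * Real.sin t ^ 2) * Real.sin_sq_add_cos_sq t
    dsimp only
    rw [smul_eq_mul, hsq, Real.sqrt_sq (by positivity)]
    field_simp
  rw [integral_marchenkoPastur, integral_eq_integral_comp_four_mul_sin_sq,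
    intervalIntegral.integral_of_le (by positivity),
    setIntegral_congr_fun measurableSet_Ioc hintegrand, integral_const_mul,
    ← intervalIntegral.integral_of_le (by positivity)]
  field_simp
  norm_num

theorem integral_sin_pow_two_mul_pi_div_two (n : ℕ) :
    ∫ t in (0 : ℝ)..(Real.pi / 2), Real.sin t ^ (2 * n) =
      Real.pi / 2 * n.centralBinom / 4 ^ n := by
  induction n with
  | zero => simp
  | succ n ih =>
    have hbinom : ((n : ℝ) + 1) * (n + 1).centralBinom = 2 * (2 * n + 1) * n.centralBinom :=
      mod_cast Nat.succ_mul_centralBinom_succ n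
    rw [mul_add_one, integral_sin_pow, ih, Real.sin_zero, Real.cos_pi_div_two,
      zero_pow (Nat.succ_ne_zero _)]
    push_cast
    field_simp
    linear_combination -(2 * Real.pi * 4 ^ n) * hbinom

theorem integral_pow_marchenkoPastur (n : ℕ) : ∫ x, x ^ n ∂marchenkoPastur = catalan n := by
  have hcatalan : ((n : ℝ) + 1) * catalan n = n.centralBinom :=
    mod_cast succ_mul_catalan_eq_centralBinom n
  have hbinom : ((n : ℝ) + 1) * (n + 1).centralBinom = 2 * (2 * n + 1) * n.centralBinom :=
    mod_cast Nat.succ_mul_centralBinom_succ n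
  have hdiff : 2 * (n.centralBinom : ℝ) - (n + 1).centralBinom / 2 = catalan n := by
    apply mul_left_cancel₀ n.cast_add_one_ne_zero
    linear_combination -hbinom / 2 - hcatalan
  calc ∫ x, x ^ n ∂marchenkoPastur
    _ = 4 / Real.pi * ∫ t in (0 : ℝ)..(Real.pi / 2),
          4 ^ n * (Real.sin t ^ (2 * n) - Real.sin t ^ (2 * (n + 1))) := by
      rw [integral_marchenkoPastur_eq_integral_sin_cos]
      congr 2 with t
      rw [Real.cos_sq', mul_pow, ← pow_mul]
      ring
    _ = 4 / Real.pi * (4 ^ n * (Real.pi / 2 * n.centralBinom / 4 ^ n -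
          Real.pi / 2 * (n + 1).centralBinom / 4 ^ (n + 1))) := by
      rw [intervalIntegral.integral_const_mul, intervalIntegral.integral_sub,
        integral_sin_pow_two_mul_pi_div_two, integral_sin_pow_two_mul_pi_div_two] <;>
      exact Continuous.intervalIntegrable (by fun_prop) _ _
    _ = catalan n := by
      rw [← hdiff]
      field_simp
      ring

instance isProbabilityMeasure_marchenkoPastur : IsProbabilityMeasure marchenkoPastur := by
  have hmass : marchenkoPastur.real Set.univ = 1 := by
    simpa using integral_pow_marchenkoPastur 0
  exact isProbabilityMeasure_iff_real.2 hmass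

/-! ### Convergence to the Marchenko–Pastur law -/

/-- The empirical distribution of the contracted zeros `z / k` of the `k`-th Laguerre polynomial. -/
def contractedZeroMeasure (k : ℕ) : Measure ℝ :=
  empiricalMeasure fun j => laguerreZero k j / k

instance isFiniteMeasure_contractedZeroMeasure (k : ℕ) :
    IsFiniteMeasure (contractedZeroMeasure k) :=
  isFiniteMeasure_empiricalMeasure _

theorem integral_contractedZeroMeasure (k : ℕ) (f : ℝ → ℝ) :
    ∫ x, f x ∂contractedZeroMeasure k = 1 / (k : ℝ) * ∑ j, f (laguerreZero k j / k) := by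
  rw [contractedZeroMeasure, integral_empiricalMeasure, Fintype.card_fin, smul_eq_mul, one_div]

theorem integral_pow_contractedZeroMeasure (m k : ℕ) :
    ∫ x, x ^ m ∂contractedZeroMeasure k = (∑ j, laguerreZero k j ^ m) / (k : ℝ) ^ (m + 1) := by
  simp only [integral_contractedZeroMeasure, div_pow, ← sum_div]
  rw [one_div_mul_eq_div, div_div, pow_succ]

theorem integral_pow_succ_contractedZeroMeasure (m : ℕ) {k : ℕ} (hk : 0 < k) :
    ∫ x, x ^ (m + 1) ∂contractedZeroMeasure k =
      ∑ ab ∈ antidiagonal m,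
          (∫ x, x ^ ab.1 ∂contractedZeroMeasure k) * ∫ x, x ^ ab.2 ∂contractedZeroMeasure k -
        m / (k : ℝ) * ∫ x, x ^ m ∂contractedZeroMeasure k := by
  have hprod : ∀ ab ∈ antidiagonal m,
      (∫ x, x ^ ab.1 ∂contractedZeroMeasure k) * ∫ x, x ^ ab.2 ∂contractedZeroMeasure k =
        (∑ j, laguerreZero k j ^ ab.1) * (∑ j, laguerreZero k j ^ ab.2) / (k : ℝ) ^ (m + 2) := by
    intro ab hab
    rw [integral_pow_contractedZeroMeasure, integral_pow_contractedZeroMeasure, div_mul_div_comm,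
      ← pow_add, ← mem_antidiagonal.1 hab, add_add_add_comm]
  rw [sum_congr rfl hprod, ← sum_div, integral_pow_contractedZeroMeasure,
    integral_pow_contractedZeroMeasure, sum_laguerreZero_pow_succ]
  field_simp
  ring

theorem tendsto_integral_pow_contractedZeroMeasure (m : ℕ) :
    Tendsto (fun k => ∫ x, x ^ m ∂contractedZeroMeasure k) atTop (nhds (catalan m)) := by
  induction m using Nat.strong_induction_on with
  | _ m ih =>
    rcases m with _ | m
    · refine tendsto_const_nhds.congr' ?_
      filter_upwards [eventually_ne_atTop 0] with k hk
      rw [integral_pow_contractedZeroMeasure]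
      simp [hk]
    · have hlim := (tendsto_finsetSum (antidiagonal m) fun ab hab =>
          (ih ab.1 (Finset.Nat.antidiagonal.fst_lt hab)).mul
          (ih ab.2 (Finset.Nat.antidiagonal.snd_lt hab))).sub
        ((tendsto_const_div_atTop_nhds_zero_nat (m : ℝ)).mul (ih m m.lt_succ_self))
      have hcatalan : (catalan (m + 1) : ℝ) =
          ∑ ab ∈ antidiagonal m, (catalan ab.1 : ℝ) * catalan ab.2 - 0 * catalan m := by
        simp [catalan_succ']
      rw [hcatalan]
      refine hlim.congr' ?_
      filter_upwards [eventually_gt_atTop 0] with k hk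
      rw [integral_pow_succ_contractedZeroMeasure m hk]

theorem tendsto_integral_contractedZeroMeasure {f : ℝ → ℝ} (hf : ContinuousOn f (Set.Icc 0 4)) :
    Tendsto (fun k => ∫ x, f x ∂contractedZeroMeasure k) atTop
      (nhds (∫ x, f x ∂marchenkoPastur)) := by
  refine tendsto_integral_of_tendsto_integral_pow
    (fun k => ae_empiricalMeasure (laguerreZero_div_mem_Icc k)) ae_marchenkoPastur_mem_Icc
    (fun m => ?_) hf
  rw [integral_pow_marchenkoPastur]
  exact tendsto_integral_pow_contractedZeroMeasure m

theorem laguerre_zeros_marchenko_pastur_general (φ : ℝ → ℝ)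
    (hφ : ContinuousOn φ (Set.Icc 0 4)) :
    Tendsto (fun k : ℕ => (1 / (k : ℝ)) * ∑ j, φ (laguerreZero k j / k)) atTop
      (nhds ((1 / (2 * Real.pi)) * ∫ x in (0 : ℝ)..4, φ x * (√(4 * x - x ^ 2) / x))) := by
  simpa only [integral_contractedZeroMeasure, integral_marchenkoPastur] using
    tendsto_integral_contractedZeroMeasure hφ

/-- the contracted zeros of Laguerre polynomials (eigenvalues of the Jacobi
matrix with diagonal `2j−1` and off-diagonal `j`) follow the Marchenko–Pastur law. -/
theorem laguerre_zeros_marchenko_pastur (φ : ℝ → ℝ) (hφc : Continuous φ)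
    (hφb : ∃ C : ℝ, ∀ x, |φ x| ≤ C) :
    Filter.Tendsto
      (fun k : ℕ =>
        (1 / (k : ℝ)) * ∑ j : Fin k,
          φ (((jacobiMatrix_isHermitian k (fun i => 2 * (i : ℝ) + 1)
                (fun i => (i : ℝ) + 1)).eigenvalues j) / (k : ℝ)))
      Filter.atTop
      (nhds ((1 / (2 * Real.pi)) *
        ∫ x in (0 : ℝ)..4, φ x * (Real.sqrt (4 * x - x ^ 2) / x))) :=
  laguerre_zeros_marchenko_pastur_general φ hφc.continuousOn
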